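/- Let f = h·conj(g) be a sense-preserving locally univalent logharmonic mapping on a simply connected domain with dilatation ω, and let φ be a locally univalent analytic function. Then P_f = Pφ (= φ''/φ') if and only if ω is a constant (1−k)/k with Re(k) > 1/2 and h = (cφ + d)^k for some complex constants c, d. -/

import Mathlib

open Complex

/-- Second dilatation ω = g'h/(g h') of the logharmonic mapping h·conj g. -/
noncomputable def omegaOf (h g : ℂ → ℂ) (z : ℂ) : ℂ :=
  deriv g z * h z / (g z * deriv h z)

/-- Pre-Schwarzian derivative of the logharmonic mapping h·conj g. -/
noncomputable def preSch (h g : ℂ → ℂ) (z : ℂ) : ℂ :=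
  deriv (deriv h) z / deriv h z + omegaOf h g z * deriv h z / h z -
    deriv (omegaOf h g) z * (starRingEnd ℂ) (omegaOf h g z) /
      (1 - (‖omegaOf h g z‖ : ℂ) ^ 2)

theorem aux_conj {w : ℂ → ℂ} {z : ℂ} (hw : DifferentiableAt ℂ w z)
    (hc : DifferentiableAt ℂ (fun x => (starRingEnd ℂ) (w x)) z) : deriv w z = 0 := by
  have h1 := hw.hasDerivAt.hasFDerivAt.restrictScalars ℝ
  have h2 := hc.hasDerivAt.hasFDerivAt.restrictScalars ℝ
  have h3 := (Complex.conjCLE.toContinuousLinearMap.hasFDerivAt (x := w z)).comp z h1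
  have h4 := h2.unique h3
  have e1 := congrArg (fun L : ℂ →L[ℝ] ℂ => L 1) h4
  have e2 := congrArg (fun L : ℂ →L[ℝ] ℂ => L I) h4
  simp at e1 e2
  rw [e1] at e2
  have e3 : (starRingEnd ℂ) (deriv w z) = 0 := by
    have : 2 * I * (starRingEnd ℂ) (deriv w z) = 0 := by linear_combination e2
    simpa using this
  simpa using e3

theorem aux_key (Ω : Set ℂ) (hΩ : IsOpen Ω) (h ℓ : ℂ → ℂ) (k : ℂ) (hk : k ≠ 0)
    (hh0 : ∀ z ∈ Ω, h z ≠ 0)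
    (hh' : ∀ z ∈ Ω, deriv h z ≠ 0)
    (hl : DifferentiableOn ℂ ℓ Ω) (he : ∀ z ∈ Ω, h z = Complex.exp (k * ℓ z)) :
    ∀ z ∈ Ω, deriv (fun x => Complex.exp (ℓ x)) z ≠ 0 ∧
      deriv (deriv (fun x => Complex.exp (ℓ x))) z / deriv (fun x => Complex.exp (ℓ x)) z =
        deriv (deriv h) z / deriv h z + (1 - k) / k * deriv h z / h z := by
  have hlz : ∀ z ∈ Ω, HasDerivAt ℓ (deriv ℓ z) z := fun z hz =>
    (hl.differentiableAt (hΩ.mem_nhds hz)).hasDerivAt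
  have hlz2 : ∀ z ∈ Ω, HasDerivAt (deriv ℓ) (deriv (deriv ℓ) z) z := fun z hz =>
    ((hl.deriv hΩ).differentiableAt (hΩ.mem_nhds hz)).hasDerivAt
  have hd : ∀ z ∈ Ω, HasDerivAt h (h z * (k * deriv ℓ z)) z := fun z hz => by
    have := ((hlz z hz).const_mul k).cexp
    rw [← he z hz] at this
    refine this.congr_of_eventuallyEq ?_
    filter_upwards [hΩ.mem_nhds hz] with x hx using he x hx
  have hF : ∀ z ∈ Ω, HasDerivAt (fun x => Complex.exp (ℓ x))
      (Complex.exp (ℓ z) * deriv ℓ z) z := fun z hz => (hlz z hz).cexp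
  intro z hz
  have hd2 : HasDerivAt (deriv h)
      (h z * (k * deriv ℓ z) * (k * deriv ℓ z) + h z * (k * deriv (deriv ℓ) z)) z := by
    refine ((hd z hz).mul ((hlz2 z hz).const_mul k)).congr_of_eventuallyEq ?_
    filter_upwards [hΩ.mem_nhds hz] with x hx using (hd x hx).deriv
  have hF2 : HasDerivAt (deriv (fun x => Complex.exp (ℓ x)))
      (Complex.exp (ℓ z) * deriv ℓ z * deriv ℓ z + Complex.exp (ℓ z) * deriv (deriv ℓ) z) z := by
    refine ((hF z hz).mul (hlz2 z hz)).congr_of_eventuallyEq ?_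
    filter_upwards [hΩ.mem_nhds hz] with x hx using (hF x hx).deriv
  have hl0 : deriv ℓ z ≠ 0 := by
    intro h0
    apply hh' z hz
    rw [(hd z hz).deriv, h0]; simp
  have hz0 := hh0 z hz
  have hE := Complex.exp_ne_zero (ℓ z)
  rw [hF2.deriv, hd2.deriv, (hF z hz).deriv, (hd z hz).deriv]
  refine ⟨mul_ne_zero hE hl0, ?_⟩
  field_simp
  ring

theorem aux_const (w A : ℂ → ℂ) (Ω : Set ℂ) (hΩ : IsOpen Ω)
    (hw : DifferentiableOn ℂ w Ω) (hA : DifferentiableOn ℂ A Ω)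
    (hω : ∀ z ∈ Ω, ‖w z‖ < 1)
    (he : ∀ z ∈ Ω, deriv w z * (starRingEnd ℂ) (w z) / (1 - (‖w z‖ : ℂ) ^ 2) = A z) :
    ∀ z ∈ Ω, deriv w z = 0 := by
  intro z hz
  by_contra h0
  apply h0
  have hwz := hw.differentiableAt (hΩ.mem_nhds hz)
  have hw' := (hw.deriv hΩ).differentiableAt (hΩ.mem_nhds hz)
  have hAz := hA.differentiableAt (hΩ.mem_nhds hz)
  have key : ∀ x ∈ Ω, deriv w x ≠ 0 → deriv w x + A x * w x ≠ 0 ∧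
      (starRingEnd ℂ) (w x) = A x / (deriv w x + A x * w x) := by
    intro x hx hx0
    have hn : (1 - (‖w x‖ : ℂ) ^ 2) ≠ 0 := by
      have h1 : (1 - ‖w x‖ ^ 2 : ℝ) ≠ 0 := by
        have := hω x hx
        have := norm_nonneg (w x)
        nlinarith
      exact_mod_cast h1
    have hm : w x * (starRingEnd ℂ) (w x) = (‖w x‖ : ℂ) ^ 2 := Complex.mul_conj' _
    have h2 : deriv w x + A x * w x = deriv w x / (1 - (‖w x‖ : ℂ) ^ 2) := by
      rw [← he x hx]
      field_simp
      linear_combination hm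
    have h3 : deriv w x + A x * w x ≠ 0 := by rw [h2]; exact div_ne_zero hx0 hn
    refine ⟨h3, ?_⟩
    rw [h2, ← he x hx]
    field_simp
  refine aux_conj hwz ?_
  have hB : DifferentiableAt ℂ (fun x => A x / (deriv w x + A x * w x)) z :=
    hAz.div (hw'.add (hAz.mul hwz)) (key z hz h0).1
  refine hB.congr_of_eventuallyEq ?_
  filter_upwards [hΩ.mem_nhds hz, hw'.continuousAt.eventually_ne h0] with x hx hx0
  exact (key x hx hx0).2

theorem aux_log (Ω : Set ℂ) (hΩ : IsOpen Ω) (hsc : SimplyConnectedSpace Ω) (h : ℂ → ℂ)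
    (hh : DifferentiableOn ℂ h Ω) (hh0 : ∀ z ∈ Ω, h z ≠ 0) :
    ∃ L : ℂ → ℂ, DifferentiableOn ℂ L Ω ∧ ∀ z ∈ Ω, Complex.exp (L z) = h z := by
  obtain ⟨L, hL, hLe⟩ := Complex.exists_continuousOn_eqOn_exp_comp (U := Ω) hsc hΩ
    hh.continuousOn (by rintro ⟨z, hz, h0⟩; exact hh0 z hz h0)
  refine ⟨L, fun z hz => ?_, fun z hz => hLe hz⟩
  have hn := hΩ.mem_nhds hz
  exact (HasDerivAt.of_comp_left (hL.continuousAt hn) (Complex.hasDerivAt_exp (L z))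
    (hh.differentiableAt hn).hasDerivAt (Complex.exp_ne_zero _)
    (hLe.eventuallyEq_of_mem hn)).differentiableAt.differentiableWithinAt

theorem preSch_eq_analytic_preSch_iff
    (Ω : Set ℂ) (hΩ : IsOpen Ω) (hconn : IsPreconnected Ω)
    (hsc : SimplyConnectedSpace Ω)
    (h g : ℂ → ℂ)
    (hh : DifferentiableOn ℂ h Ω) (hg : DifferentiableOn ℂ g Ω)
    (hh0 : ∀ z ∈ Ω, h z ≠ 0) (hg0 : ∀ z ∈ Ω, g z ≠ 0)
    (hh' : ∀ z ∈ Ω, deriv h z ≠ 0)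
    (hω : ∀ z ∈ Ω, ‖omegaOf h g z‖ < 1)
    (φ : ℂ → ℂ) (hφ : DifferentiableOn ℂ φ Ω)
    (hφ' : ∀ z ∈ Ω, deriv φ z ≠ 0) :
    (∀ z ∈ Ω, preSch h g z = deriv (deriv φ) z / deriv φ z) ↔
    ∃ (k c d : ℂ) (ℓ : ℂ → ℂ),
      1 / 2 < k.re ∧
      (∀ z ∈ Ω, omegaOf h g z = (1 - k) / k) ∧
      DifferentiableOn ℂ ℓ Ω ∧
      (∀ z ∈ Ω, c * φ z + d ≠ 0) ∧
      (∀ z ∈ Ω, Complex.exp (ℓ z) = c * φ z + d) ∧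
      (∀ z ∈ Ω, h z = Complex.exp (k * ℓ z)) := by
  have hdo : DifferentiableOn ℂ (omegaOf h g) Ω := by
    have := ((hg.deriv hΩ).mul hh).div (hg.mul (hh.deriv hΩ))
      (fun z hz => mul_ne_zero (hg0 z hz) (hh' z hz))
    exact this
  constructor
  · intro H
    have hA : DifferentiableOn ℂ (fun z => deriv (deriv h) z / deriv h z +
        omegaOf h g z * deriv h z / h z - deriv (deriv φ) z / deriv φ z) Ω :=
      ((((hh.deriv hΩ).deriv hΩ).div (hh.deriv hΩ) hh').add
        ((hdo.mul (hh.deriv hΩ)).div hh hh0)).sub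
        (((hφ.deriv hΩ).deriv hΩ).div (hφ.deriv hΩ) hφ')
    have hw0 := aux_const (omegaOf h g) _ Ω hΩ hdo hA hω (fun z hz => by
      have := H z hz
      simp only [preSch] at this
      linear_combination -this)
    obtain ⟨a, ha⟩ := hΩ.exists_is_const_of_deriv_eq_zero hconn hdo (fun z hz => hw0 z hz)
    obtain ⟨z0, hz0⟩ : Ω.Nonempty := IsSimplyConnected.nonempty (s := Ω) hsc
    have ha1 : ‖a‖ < 1 := by rw [← ha z0 hz0]; exact hω z0 hz0
    have hre : -1 < a.re := by
      have := Complex.abs_re_le_norm a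
      have := neg_abs_le a.re
      linarith
    have ha0 : 1 + a ≠ 0 := by
      intro h0
      have := congrArg Complex.re h0
      simp at this
      linarith
    set k : ℂ := 1 / (1 + a) with hk
    have hk0 : k ≠ 0 := by rw [hk]; exact div_ne_zero one_ne_zero ha0
    have hak : a = (1 - k) / k := by rw [hk]; field_simp; ring
    obtain ⟨L, hL, hLe⟩ := aux_log Ω hΩ hsc h hh hh0
    have hl : DifferentiableOn ℂ (fun z => L z / k) Ω := hL.div_const k
    have hle : ∀ z ∈ Ω, h z = Complex.exp (k * (L z / k)) := fun z hz => by
      rw [mul_div_cancel₀ _ hk0, hLe z hz]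
    have key := aux_key Ω hΩ h _ k hk0 hh0 hh' hl hle
    have hF : DifferentiableOn ℂ (fun z => Complex.exp (L z / k)) Ω := hl.cexp
    obtain ⟨c, hc, hce⟩ := (logDeriv_eqOn_iff (hF.deriv hΩ) (hφ.deriv hΩ) hΩ hconn hφ'
      (fun z hz => (key z hz).1)).1 (fun z hz => by
        have := H z hz
        simp only [preSch, hw0 z hz, zero_mul, zero_div, sub_zero] at this
        rw [logDeriv_apply, logDeriv_apply, (key z hz).2, ← this, ha z hz, ← hak])
    obtain ⟨d, hd⟩ := hΩ.exists_eq_add_of_deriv_eq hconn hF (hφ.const_mul c) (fun z hz => by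
      rw [hce hz, deriv_const_mul _ (hφ.differentiableAt (hΩ.mem_nhds hz))]; rfl)
    refine ⟨k, c, d, fun z => L z / k, ?_, fun z hz => by rw [ha z hz, hak], hl,
      fun z hz => ?_, fun z hz => hd hz, hle⟩
    · have hn : 0 < Complex.normSq (1 + a) := Complex.normSq_pos.2 ha0
      have h2 : Complex.normSq a < 1 := by
        rw [Complex.normSq_eq_norm_sq]
        have := norm_nonneg a
        nlinarith
      rw [hk, one_div (1 + a), Complex.inv_re, div_lt_div_iff₀ two_pos hn]
      simp only [Complex.normSq_apply, Complex.add_re, Complex.add_im, Complex.one_re,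
        Complex.one_im] at h2 ⊢
      nlinarith
    · have := hd hz
      simp only at this
      rw [← this]
      exact Complex.exp_ne_zero _
  · rintro ⟨k, c, d, ℓ, hk, hw, hl, hn, hle, hhe⟩ z hz
    have hk0 : k ≠ 0 := by
      rintro rfl
      norm_num at hk
    obtain ⟨k1, k2⟩ := aux_key Ω hΩ h ℓ k hk0 hh0 hh' hl hhe z hz
    have hw0 : deriv (omegaOf h g) z = 0 := by
      have : Set.EqOn (omegaOf h g) (fun _ => (1 - k) / k) Ω := hw
      rw [this.deriv hΩ hz]; simp
    have hd1 : Set.EqOn (deriv fun x => Complex.exp (ℓ x)) (fun x => c * deriv φ x) Ω := by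
      intro x hx
      have : Set.EqOn (fun x => Complex.exp (ℓ x)) (fun x => c * φ x + d) Ω := hle
      rw [this.deriv hΩ hx]
      simp [deriv_const_mul _ (hφ.differentiableAt (hΩ.mem_nhds hx))]
    have hd2 : deriv (deriv fun x => Complex.exp (ℓ x)) z = c * deriv (deriv φ) z := by
      rw [hd1.deriv hΩ hz,
        deriv_const_mul _ ((hφ.deriv hΩ).differentiableAt (hΩ.mem_nhds hz))]
    rw [hd1 hz] at k1
    have hc : c ≠ 0 := left_ne_zero_of_mul k1
    simp only [preSch, hw0, zero_mul, zero_div, sub_zero]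
    rw [hw z hz, ← k2, hd2, hd1 hz, mul_div_mul_left _ _ hc]
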